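/- Under the stated assumptions including non-periodicity, for every fixed integer k ≥ 0, Σ_{1≤n≤N} a(n)(log n)^k ∼ (μ/ρ) N^{ρ} (log N)^k ∼ A(N)(log N)^k as N → ∞. -/

import Mathlib

open scoped BigOperators ENNReal
open Filter Asymptotics

noncomputable section

/-- `af P m n` is the number of ordered `m`-tuples `(n₁,…,n_m)` of elements of `P`
with product `n` (so `af P 0 n = 1` iff `n = 1`). -/
def af (P : Set ℕ) (m n : ℕ) : ℕ :=
  Nat.card {t : Fin m → ℕ // (∀ i, t i ∈ P) ∧ ∏ i, t i = n}

/-- `aTot P n = a(n) = Σ_{m ≥ 0} a_m(n)`. -/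
def aTot (P : Set ℕ) (n : ℕ) : ℝ := ∑' m : ℕ, (af P m n : ℝ)

/-- `Acum P N = A(N) = Σ_{1 ≤ n ≤ N} a(n)`. -/
def Acum (P : Set ℕ) (N : ℕ) : ℝ := ∑ n ∈ Finset.Icc 1 N, aTot P n

/-- The Dirichlet series `𝒫(x) = Σ_{n ∈ 𝒫} n^{-x}` at a real point. -/
def Pval (P : Set ℕ) (x : ℝ) : ℝ := ∑' n : P, ((n : ℕ) : ℝ) ^ (-x)

/-- `𝒫'(x) = -Σ_{n ∈ 𝒫} n^{-x} log n`. -/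
def Pderiv1 (P : Set ℕ) (x : ℝ) : ℝ := -∑' n : P, ((n : ℕ) : ℝ) ^ (-x) * Real.log (n : ℕ)

/-- `𝒫''(x) = Σ_{n ∈ 𝒫} n^{-x} (log n)^2`. -/
def Pderiv2 (P : Set ℕ) (x : ℝ) : ℝ := ∑' n : P, ((n : ℕ) : ℝ) ^ (-x) * (Real.log (n : ℕ)) ^ 2

/-- The abscissa of convergence `κ` of the Dirichlet series of `P`, as an extended real
(`⊥` when `P` is finite). -/
def kappa (P : Set ℕ) : EReal :=
  sInf {x : EReal | ∃ r : ℝ, x = (r : EReal) ∧ Summable (fun n : P => ((n : ℕ) : ℝ) ^ (-r))}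

open Classical in
/-- The (possibly infinite) value `𝒫(x) ∈ (0,∞]` of the Dirichlet series at an
extended-real point; at `x = -∞` every term `n^{-x}` is infinite. -/
def PvalE (P : Set ℕ) (x : EReal) : ℝ≥0∞ :=
  if x = ⊥ then ⊤ else ∑' n : P, ENNReal.ofReal (((n : ℕ) : ℝ) ^ (-x.toReal))

/-!
Peeling off the first factor of a factorization turns `A` into a solution of a renewal equation:
`Z t = e ^ (-ρ t) A(e ^ t)` satisfies `Z t = e ^ (-ρ t) + ∑_{n ∈ P} n ^ (-ρ) Z (t - log n)` for
`t ≥ 0`, and the weights `n ^ (-ρ)` sum to `𝒫(ρ) = 1`. Let `L` be the largest or the smallest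
cluster value of `Z` at infinity. Along an ultrafilter realizing `L`, the equation exhibits `L`
as an average of cluster values, so all of them equal `L`, and `Z (t - s) → L` for every `s` in
the additive semigroup generated by the numbers `log n`. By non-periodicity that semigroup has
gaps tending to `0`, and since `e ^ (ρ t) Z t` is monotone, `Z (t - s)` is eventually close to
`L`, uniformly for `s` in compact sets far to the right. The integrated equation
`∑ n ^ (-ρ) ∫_{t - log n}^t Z = ∫_0^t e ^ (-ρ u) du` then forces
`L = (1 / ρ) / ∑ n ^ (-ρ) log n = μ / ρ` in both cases, whence `A(N) ∼ (μ / ρ) N ^ ρ`.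
A monotone slowly varying weight may be replaced by its value at `N`, because it is almost
constant on `[δ N, N]` and only a proportion `δ ^ ρ` of the mass of `A` on `[1, N]` lies below
`δ N`.
-/

section Renewal

open Set Topology MeasureTheory Real

/-- A set of reals that meets every interval `[s, s + ε]` with `s` large in terms of `ε`. -/
def EventuallyDense (S : Set ℝ) : Prop :=
  ∀ ε > 0, ∃ T, ∀ s ≥ T, (S ∩ Icc s (s + ε)).Nonempty

theorem eventuallyDense_of_forall_exists_pair {S : AddSubmonoid ℝ}
    (hS : ∀ ε > 0, ∃ a ∈ S, ∃ b ∈ S, 0 < b ∧ b < a ∧ a ≤ b + ε) :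
    EventuallyDense (S : Set ℝ) := by
  intro ε hε
  obtain ⟨a, ha, b, hb, hb0, hba, hab⟩ := hS ε hε
  have hd : 0 < a - b := sub_pos.2 hba
  refine ⟨⌈b / (a - b)⌉₊ * b, fun s hs => ?_⟩
  -- Start from the last multiple `m * b ≤ s` and trade `j` copies of `b` for copies of `a`.
  have hs0 : 0 ≤ s := le_trans (by positivity) hs
  set m := ⌊s / b⌋₊
  have hms : m * b ≤ s := (le_div_iff₀ hb0).1 (Nat.floor_le (by positivity))
  have hsm : s < (m + 1) * b := (div_lt_iff₀ hb0).1 (Nat.lt_floor_add_one _)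
  set j := ⌈(s - m * b) / (a - b)⌉₊
  have hjm : j ≤ m := by
    refine (Nat.ceil_mono ?_).trans (Nat.le_floor ((le_div_iff₀ hb0).2 hs))
    gcongr
    linarith
  have hj : s - m * b ≤ j * (a - b) := (div_le_iff₀ hd).1 (Nat.le_ceil _)
  have hj' : j * (a - b) < s - m * b + (a - b) := by
    have := Nat.ceil_lt_add_one (show 0 ≤ (s - m * b) / (a - b) from
      div_nonneg (by linarith) hd.le)
    rwa [← sub_lt_iff_lt_add, lt_div_iff₀ hd, sub_mul, one_mul, sub_lt_iff_lt_add] at this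
  have hval : (m - j) • b + j • a = m * b + j * (a - b) := by
    simp only [nsmul_eq_mul, Nat.cast_sub hjm]
    ring
  refine ⟨(m - j) • b + j • a, S.add_mem (S.nsmul_mem hb _) (S.nsmul_mem ha _), ?_, ?_⟩ <;>
    rw [hval] <;> linarith

theorem exists_sub_eq_of_mem_addSubgroup_closure {G : Type*} [AddCommGroup G] {s : Set G} {x : G}
    (hx : x ∈ AddSubgroup.closure s) :
    ∃ a ∈ AddSubmonoid.closure s, ∃ b ∈ AddSubmonoid.closure s, a - b = x := by
  induction hx using AddSubgroup.closure_induction with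
  | mem x hx => exact ⟨x, AddSubmonoid.subset_closure hx, 0, zero_mem _, sub_zero x⟩
  | zero => exact ⟨0, zero_mem _, 0, zero_mem _, sub_zero 0⟩
  | add x y _ _ hx hy =>
    obtain ⟨a, ha, b, hb, rfl⟩ := hx
    obtain ⟨c, hc, d, hd, rfl⟩ := hy
    exact ⟨a + c, add_mem ha hc, b + d, add_mem hb hd, add_sub_add_comm a c b d⟩
  | neg x _ hx =>
    obtain ⟨a, ha, b, hb, rfl⟩ := hx
    exact ⟨b, hb, a, ha, (neg_sub a b).symm⟩

theorem eventuallyDense_addSubmonoid_closure {s : Set ℝ} (hs : ∀ x ∈ s, 0 < x)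
    (hne : s.Nonempty) (hdense : Dense (AddSubgroup.closure s : Set ℝ)) :
    EventuallyDense (AddSubmonoid.closure s : Set ℝ) := by
  refine eventuallyDense_of_forall_exists_pair fun ε hε => ?_
  obtain ⟨c, hc⟩ := hne
  obtain ⟨g, hg, hg0, hgε⟩ := hdense.exists_between hε
  obtain ⟨a, ha, b, hb, rfl⟩ := exists_sub_eq_of_mem_addSubgroup_closure hg
  have hb0 : 0 ≤ b :=
    (AddSubmonoid.closure_le (S := AddSubmonoid.nonneg ℝ)).2 (fun x hx => (hs x hx).le) hb
  have hc0 := hs c hc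
  have hcS := AddSubmonoid.subset_closure hc
  exact ⟨a + c, add_mem ha hcS, b + c, add_mem hb hcS, by linarith, by linarith, by linarith⟩

/-- `Z` becomes monotone after multiplication by `t ↦ e ^ (ρ t)`. For the normalized counting
function `Z t = e ^ (-ρ t) A(e ^ t)` this replaces continuity: `Z` can jump, but only upwards, and
falls at most at the rate `ρ`. -/
def ExpMonotone (ρ : ℝ) (Z : ℝ → ℝ) : Prop :=
  Monotone fun t => exp (ρ * t) * Z t

namespace ExpMonotone

variable {ρ : ℝ} {Z : ℝ → ℝ}

theorem le_exp_mul (hZ : ExpMonotone ρ Z) {s t : ℝ} (hst : s ≤ t) :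
    Z s ≤ exp (ρ * (t - s)) * Z t := by
  have h := hZ hst
  rwa [← le_div_iff₀' (exp_pos _), mul_div_right_comm, ← exp_sub, ← mul_sub] at h

theorem le_exp_mul_of_le_add (hZ : ExpMonotone ρ Z) (hρ : 0 ≤ ρ) {s t δ : ℝ} (ht : 0 ≤ Z t)
    (hst : s ≤ t) (hts : t ≤ s + δ) : Z s ≤ exp (ρ * δ) * Z t :=
  (hZ.le_exp_mul hst).trans <| by gcongr; linarith

theorem nonneg (hZ : ExpMonotone ρ Z) (hZ0 : ∀ t < 0, Z t = 0) (t : ℝ) : 0 ≤ Z t := by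
  rcases lt_or_ge t 0 with ht | ht
  · exact (hZ0 t ht).ge
  · have h := hZ.le_exp_mul (show -1 ≤ t by linarith)
    rw [hZ0 (-1) (by norm_num)] at h
    exact nonneg_of_mul_nonneg_right h (exp_pos _)

theorem intervalIntegrable (hZ : ExpMonotone ρ Z) (a b : ℝ) : IntervalIntegrable Z volume a b := by
  have h := (Monotone.intervalIntegrable (μ := volume) (a := a) (b := b) hZ).continuousOn_mul
    (g := fun t => exp (-(ρ * t))) (by fun_prop)
  simpa only [← mul_assoc, ← exp_add, neg_add_cancel, exp_zero, one_mul] using h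

/-- Since `Z` falls at a bounded rate, its values at the two ends of a short interval control those
in between. -/
theorem eventually_forall_mem_Icc (hZ : ExpMonotone ρ Z) (hρ : 0 ≤ ρ) (hZ0 : ∀ t, 0 ≤ Z t)
    {l : Filter ℝ} {L s₁ s₂ δ ε : ℝ} (hs : s₂ ≤ s₁ + δ)
    (h₁ : Tendsto (fun t => Z (t - s₁)) l (𝓝 L)) (h₂ : Tendsto (fun t => Z (t - s₂)) l (𝓝 L))
    (hε₁ : exp (ρ * δ) * L < L + ε) (hε₂ : exp (ρ * δ) * (L - ε) < L) :
    ∀ᶠ t in l, ∀ u ∈ Icc s₁ s₂, |Z (t - u) - L| ≤ ε := by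
  filter_upwards [(h₁.const_mul _).eventually_lt_const hε₁, h₂.eventually_const_lt hε₂]
    with t ht₁ ht₂ u hu
  have hupper : Z (t - u) ≤ exp (ρ * δ) * Z (t - s₁) :=
    hZ.le_exp_mul_of_le_add hρ (hZ0 _) (by linarith [hu.1]) (by linarith [hu.2])
  have hlower : Z (t - s₂) ≤ exp (ρ * δ) * Z (t - u) :=
    hZ.le_exp_mul_of_le_add hρ (hZ0 _) (by linarith [hu.2]) (by linarith [hu.1])
  have : L - ε < Z (t - u) := lt_of_mul_lt_mul_left (ht₂.trans_le hlower) (exp_pos _).le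
  rw [abs_le]
  constructor <;> linarith

theorem eventually_forall_mem_Icc_of_eventuallyDense (hZ : ExpMonotone ρ Z) (hρ : 0 ≤ ρ)
    (hZ0 : ∀ t, 0 ≤ Z t) {S : Set ℝ} (hS : EventuallyDense S) {l : Filter ℝ} {L ε : ℝ}
    (hL : ∀ s ∈ S, Tendsto (fun t => Z (t - s)) l (𝓝 L)) (hε : 0 < ε) :
    ∃ T, ∀ a b, T ≤ a → ∀ᶠ t in l, ∀ u ∈ Icc a b, |Z (t - u) - L| ≤ ε := by
  obtain ⟨δ, ⟨hδ₁, hδ₂⟩, hδ⟩ : ∃ δ, (exp (ρ * (4 * δ)) * L < L + ε ∧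
      exp (ρ * (4 * δ)) * (L - ε) < L) ∧ 0 < δ := by
    have hexp (c : ℝ) : Tendsto (fun δ => exp (ρ * (4 * δ)) * c) (𝓝[>] 0) (𝓝 c) := by
      have : Continuous fun δ => exp (ρ * (4 * δ)) * c := by fun_prop
      simpa using (this.tendsto 0).mono_left nhdsWithin_le_nhds
    exact ((((hexp L).eventually_lt_const (by linarith)).and
      ((hexp (L - ε)).eventually_lt_const (by linarith))).and self_mem_nhdsWithin).exists
  obtain ⟨T, hT⟩ := hS δ hδ
  refine ⟨T + 2 * δ, fun a b ha => ?_⟩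
  refine isCompact_Icc.induction_on (p := fun A => ∀ᶠ t in l, ∀ u ∈ A, |Z (t - u) - L| ≤ ε)
    (by simp) (fun A B hAB hB => hB.mono fun t ht u hu => ht u (hAB hu))
    (fun A B hA hB => (hA.and hB).mono fun t ht u hu => hu.elim (ht.1 u) (ht.2 u))
    fun u hu => ?_
  obtain ⟨s₁, hs₁, hs₁'⟩ := hT (u - 2 * δ) (by linarith [hu.1])
  obtain ⟨s₂, hs₂, hs₂'⟩ := hT (u + δ) (by linarith [hu.1])
  refine ⟨Icc s₁ s₂, mem_nhdsWithin_of_mem_nhds (Icc_mem_nhds ?_ ?_),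
    hZ.eventually_forall_mem_Icc hρ hZ0 (δ := 4 * δ) ?_ (hL _ hs₁) (hL _ hs₂) hδ₁ hδ₂⟩ <;>
  linarith [hs₁'.1, hs₁'.2, hs₂'.1, hs₂'.2]

end ExpMonotone

theorem abs_integral_sub_mul_le {f : ℝ → ℝ} {a b L ε : ℝ} (hab : a ≤ b)
    (hf : IntervalIntegrable f volume a b) (h : ∀ u ∈ Ioc a b, |f u - L| ≤ ε) :
    |(∫ u in a..b, f u) - L * (b - a)| ≤ ε * (b - a) := by
  have hint := intervalIntegral.norm_integral_le_of_norm_le_const (f := fun u => f u - L)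
    fun u hu => h u (uIoc_of_le hab ▸ hu)
  rwa [intervalIntegral.integral_sub hf (by simp), intervalIntegral.integral_const, smul_eq_mul,
    mul_comm _ L, abs_of_nonneg (sub_nonneg.2 hab)] at hint

theorem exists_tendsto_hasSum_mul_of_ultrafilter {α ι : Type*} (f : Ultrafilter α)
    {w b : ι → ℝ} {F : ι → α → ℝ} {G : α → ℝ} {G₀ : ℝ} (hb : Summable fun i => |w i| * b i)
    (hF : ∀ i x, |F i x| ≤ b i) (hG : ∀ᶠ x in f, HasSum (fun i => w i * F i x) (G x))
    (hG₀ : Tendsto G f (𝓝 G₀)) :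
    ∃ K : ι → ℝ, (∀ i, Tendsto (F i) f (𝓝 (K i))) ∧ HasSum (fun i => w i * K i) G₀ := by
  have hlim (i : ι) : ∃ y, |y| ≤ b i ∧ Tendsto (F i) f (𝓝 y) := by
    obtain ⟨y, hy, hfy⟩ := (isCompact_Icc (a := -b i) (b := b i)).ultrafilter_le_nhds' (f.map (F i))
      (Ultrafilter.mem_map.2 (Eventually.of_forall fun x => abs_le.1 (hF i x)))
    exact ⟨y, abs_le.2 hy, hfy⟩
  choose K hKb hK using hlim
  have hbound {i : ι} {y : ℝ} (hy : |y| ≤ b i) : ‖w i * y‖ ≤ |w i| * b i := by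
    rw [norm_mul]
    exact mul_le_mul_of_nonneg_left hy (abs_nonneg _)
  refine ⟨K, hK, ?_⟩
  have hsum : Summable fun i => w i * K i := hb.of_norm_bounded fun i => hbound (hKb i)
  have htend : Tendsto (fun x => ∑' i, w i * F i x) f (𝓝 (∑' i, w i * K i)) :=
    tendsto_tsum_of_dominated_convergence hb (fun i => (hK i).const_mul (w i))
      (Eventually.of_forall fun x i => hbound (hF i x))
  have hG' := hG₀.congr' (hG.mono fun x hx => hx.tsum_eq.symm)
  exact tendsto_nhds_unique htend hG' ▸ hsum.hasSum

theorem eq_of_hasSum_mul_of_forall_le {ι : Type*} {w x : ι → ℝ} {L : ℝ} (hw : ∀ i, 0 < w i)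
    (hw1 : HasSum w 1) (hx : HasSum (fun i => w i * x i) L) (hle : ∀ i, x i ≤ L) (i : ι) :
    x i = L := by
  have hdiff : HasSum (fun i => w i * (L - x i)) 0 := by
    simpa only [mul_sub, one_mul, sub_self] using (hw1.mul_right L).sub hx
  have hzero := (hasSum_zero_iff_of_nonneg fun j => mul_nonneg (hw j).le (sub_nonneg.2 (hle j))).1
    hdiff
  have hi : w i * (L - x i) = 0 := congrFun hzero i
  linarith [(mul_eq_zero.1 hi).resolve_left (hw i).ne']

theorem eq_of_hasSum_mul_of_extremal {ι : Type*} {w x : ι → ℝ} {L : ℝ} (hw : ∀ i, 0 < w i)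
    (hw1 : HasSum w 1) (hx : HasSum (fun i => w i * x i) L)
    (hext : (∀ i, x i ≤ L) ∨ ∀ i, L ≤ x i) (i : ι) : x i = L := by
  rcases hext with hle | hge
  · exact eq_of_hasSum_mul_of_forall_le hw hw1 hx hle i
  · refine neg_injective (eq_of_hasSum_mul_of_forall_le (x := fun i => -x i) hw hw1 ?_
      (fun i => neg_le_neg (hge i)) i)
    simpa only [mul_neg] using hx.neg

/-- `Z` vanishes on the negative half-line and solves the renewal equation
`Z t = g t + ∑ i, w i * Z (t - ℓ i)` for `t ≥ 0`, where the step distribution charges the points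
`ℓ i > 0` with the probabilities `w i > 0`. -/
structure IsRenewalSolution {ι : Type*} (w ℓ : ι → ℝ) (g Z : ℝ → ℝ) : Prop where
  weight_pos : ∀ i, 0 < w i
  hasSum_weight : HasSum w 1
  step_pos : ∀ i, 0 < ℓ i
  eq_zero_of_neg : ∀ t < 0, Z t = 0
  hasSum_mul_sub : ∀ t, 0 ≤ t → HasSum (fun i => w i * Z (t - ℓ i)) (Z t - g t)

namespace IsRenewalSolution

variable {ι : Type*} {w ℓ : ι → ℝ} {g Z : ℝ → ℝ} {ρ C L : ℝ}

theorem nonempty (h : IsRenewalSolution w ℓ g Z) : Nonempty ι := by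
  by_contra hι
  rw [not_nonempty_iff] at hι
  exact zero_ne_one (hasSum_empty.unique h.hasSum_weight)

theorem integral_sub_step (h : IsRenewalSolution w ℓ g Z) (hZ : ExpMonotone ρ Z) (i : ι) (t : ℝ) :
    ∫ u in 0..t, Z (u - ℓ i) = (∫ u in 0..t, Z u) - ∫ u in (t - ℓ i)..t, Z u := by
  have hneg : ∫ u in (0 - ℓ i)..0, Z u = 0 := by
    rw [intervalIntegral.integral_of_le (by linarith [h.step_pos i]),
      integral_Ioc_eq_integral_Ioo]
    exact setIntegral_eq_zero_of_forall_eq_zero fun u hu => h.eq_zero_of_neg u hu.2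
  have hint := hZ.intervalIntegrable
  have hleft := intervalIntegral.integral_add_adjacent_intervals (hint (0 - ℓ i) 0) (hint 0 t)
  have hright := intervalIntegral.integral_add_adjacent_intervals
    (hint (0 - ℓ i) (t - ℓ i)) (hint (t - ℓ i) t)
  rw [intervalIntegral.integral_comp_sub_right]
  linarith

theorem le_exp_mul (h : IsRenewalSolution w ℓ g Z) (hZ : ExpMonotone ρ Z) (hρ : 0 ≤ ρ) {s t : ℝ}
    (hst : s ≤ t) : Z s ≤ exp (ρ * t) * Z t := by
  have hZ0 := hZ.nonneg h.eq_zero_of_neg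
  rcases lt_or_ge s 0 with hs | hs
  · rw [h.eq_zero_of_neg s hs]
    exact mul_nonneg (exp_pos _).le (hZ0 t)
  · exact hZ.le_exp_mul_of_le_add hρ (hZ0 t) hst (by linarith)

/-- Integrating the renewal equation over `[0, t]`, all but the last window of each step cancels. -/
theorem hasSum_mul_integral (h : IsRenewalSolution w ℓ g Z) (hZ : ExpMonotone ρ Z) (hρ : 0 ≤ ρ)
    (hg : IntegrableOn g (Ioi 0)) {t : ℝ} (ht : 0 ≤ t) :
    HasSum (fun i => w i * ∫ u in (t - ℓ i)..t, Z u) (∫ u in 0..t, g u) := by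
  have hw := h.hasSum_weight
  have : Countable ι := by
    have hsupp := hw.summable.countable_support
    rwa [Function.support_eq_univ fun i => (h.weight_pos i).ne', countable_univ_iff] at hsupp
  have hZ0 := hZ.nonneg h.eq_zero_of_neg
  have hZint := hZ.intervalIntegrable
  have hshift (i : ι) : IntervalIntegrable (fun u => Z (u - ℓ i)) volume 0 t := by
    simpa only [sub_add_cancel] using (hZint (0 - ℓ i) (t - ℓ i)).comp_sub_right (ℓ i)
  have hgint : IntervalIntegrable g volume 0 t :=
    (intervalIntegrable_iff_integrableOn_Ioc_of_le ht).2 (hg.mono_set Ioc_subset_Ioi_self)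
  have hbound (i : ι) (u : ℝ) (hu : u ∈ uIoc 0 t) :
      ‖w i * Z (u - ℓ i)‖ ≤ w i * (exp (ρ * t) * Z t) := by
    rw [uIoc_of_le ht] at hu
    rw [norm_of_nonneg (mul_nonneg (h.weight_pos i).le (hZ0 _))]
    exact mul_le_mul_of_nonneg_left (h.le_exp_mul hZ hρ (by linarith [hu.2, h.step_pos i]))
      (h.weight_pos i).le
  have hconv : HasSum (fun i => ∫ u in 0..t, w i * Z (u - ℓ i)) (∫ u in 0..t, (Z u - g u)) :=
    intervalIntegral.hasSum_integral_of_dominated_convergence _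
      (fun i => ((hshift i).const_mul (w i)).def'.aestronglyMeasurable)
      (fun i => Eventually.of_forall (hbound i))
      (Eventually.of_forall fun u _ => (hw.mul_right _).summable) (by simp)
      (Eventually.of_forall fun u hu => h.hasSum_mul_sub u (uIoc_of_le ht ▸ hu).1.le)
  have hdiff := (hw.mul_right (∫ u in 0..t, Z u)).sub hconv
  simpa only [intervalIntegral.integral_const_mul, h.integral_sub_step hZ, ← mul_sub,
    sub_sub_cancel, one_mul, intervalIntegral.integral_sub (hZint _ _) hgint] using hdiff

theorem exists_forall_mem_Icc (h : IsRenewalSolution w ℓ g Z) (hZ : ExpMonotone ρ Z) (hρ : 0 ≤ ρ)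
    (hg : IntegrableOn g (Ioi 0)) : ∃ C, ∀ t, Z t ∈ Icc 0 C := by
  have hZ0 := hZ.nonneg h.eq_zero_of_neg
  obtain ⟨i⟩ := h.nonempty
  have hw := h.weight_pos i
  have hℓ := h.step_pos i
  set G := ∫ u in Ioi 0, |g u|
  have : 0 ≤ G := integral_nonneg fun u => abs_nonneg _
  have hwindow (t : ℝ) (ht : 0 ≤ t) : w i * ∫ u in (t - ℓ i)..t, Z u ≤ G := by
    have hle := le_hasSum (h.hasSum_mul_integral hZ hρ hg ht) i fun j _ =>
      mul_nonneg (h.weight_pos j).le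
        (intervalIntegral.integral_nonneg (by linarith [h.step_pos j]) fun u _ => hZ0 u)
    refine hle.trans <| (le_abs_self _).trans <|
      (intervalIntegral.abs_integral_le_integral_abs ht).trans ?_
    rw [intervalIntegral.integral_of_le ht]
    exact setIntegral_mono_set hg.abs (Eventually.of_forall fun u => abs_nonneg _)
      Ioc_subset_Ioi_self.eventuallyLE
  refine ⟨exp (ρ * ℓ i) * (G / w i) / ℓ i, fun t => ⟨hZ0 t, ?_⟩⟩
  rcases lt_or_ge t 0 with ht | ht
  · rw [h.eq_zero_of_neg t ht]
    positivity
  rw [le_div_iff₀ hℓ]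
  calc Z t * ℓ i = ∫ _ in t..(t + ℓ i), Z t := by simp [mul_comm]
    _ ≤ ∫ u in t..(t + ℓ i), exp (ρ * ℓ i) * Z u :=
        intervalIntegral.integral_mono_on (by linarith) (by simp)
          ((hZ.intervalIntegrable _ _).const_mul _)
          fun u hu => hZ.le_exp_mul_of_le_add hρ (hZ0 u) hu.1 hu.2
    _ = exp (ρ * ℓ i) * ∫ u in (t + ℓ i - ℓ i)..(t + ℓ i), Z u := by
        rw [intervalIntegral.integral_const_mul, add_sub_cancel_right]
    _ ≤ exp (ρ * ℓ i) * (G / w i) := by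
        gcongr
        exact (le_div_iff₀' hw).2 (hwindow _ (by linarith))

/-- By the renewal equation, `L` is an average of cluster values, among which it is extremal. -/
theorem tendsto_sub_step (h : IsRenewalSolution w ℓ g Z) (hC : ∀ t, Z t ∈ Icc 0 C)
    (hg0 : Tendsto g atTop (𝓝 0))
    (hext : (∀ x, MapClusterPt x atTop Z → x ≤ L) ∨ ∀ x, MapClusterPt x atTop Z → L ≤ x)
    {f : Ultrafilter ℝ} (hf : (f : Filter ℝ) ≤ atTop) (hfL : Tendsto Z f (𝓝 L)) (i : ι) :
    Tendsto (fun t => Z (t - ℓ i)) f (𝓝 L) := by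
  have hlim : Tendsto (fun t => Z t - g t) f (𝓝 L) := by
    simpa only [sub_zero] using hfL.sub (hg0.mono_left hf)
  obtain ⟨K, hK, hsum⟩ := exists_tendsto_hasSum_mul_of_ultrafilter f
    (b := fun _ => C) (F := fun j t => Z (t - ℓ j)) (h.hasSum_weight.summable.abs.mul_right C)
    (fun j t => abs_le.2 ⟨by linarith [(hC t).1, (hC t).2, (hC (t - ℓ j)).1], (hC _).2⟩)
    (hf (eventually_ge_atTop 0 |>.mono h.hasSum_mul_sub)) hlim
  have hcluster (j : ι) : MapClusterPt (K j) atTop Z :=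
    .of_comp ((tendsto_atTop_add_const_right _ (-ℓ j) tendsto_id).mono_left hf) (hK j).mapClusterPt
  have hKL : K i = L := eq_of_hasSum_mul_of_extremal h.weight_pos h.hasSum_weight hsum
    (hext.imp (fun hle j => hle _ (hcluster j)) fun hge j => hge _ (hcluster j)) i
  exact hKL ▸ hK i

theorem tendsto_sub_of_mem_closure (h : IsRenewalSolution w ℓ g Z) (hC : ∀ t, Z t ∈ Icc 0 C)
    (hg0 : Tendsto g atTop (𝓝 0))
    (hext : (∀ x, MapClusterPt x atTop Z → x ≤ L) ∨ ∀ x, MapClusterPt x atTop Z → L ≤ x)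
    {s : ℝ} (hs : s ∈ AddSubmonoid.closure (range ℓ)) {f : Ultrafilter ℝ}
    (hf : (f : Filter ℝ) ≤ atTop) (hfL : Tendsto Z f (𝓝 L)) :
    Tendsto (fun t => Z (t - s)) f (𝓝 L) := by
  induction hs using AddSubmonoid.closure_induction generalizing f with
  | mem s hs =>
    obtain ⟨i, rfl⟩ := hs
    exact h.tendsto_sub_step hC hg0 hext hf hfL i
  | zero => simpa only [sub_zero] using hfL
  | add a b _ _ ha hb =>
    have hmap : (f.map fun t => t - a : Filter ℝ) ≤ atTop :=
      (tendsto_atTop_add_const_right _ (-a) tendsto_id).mono_left hf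
    simpa only [Function.comp_def, sub_sub] using
      tendsto_map'_iff.1 (hb (f := f.map fun t => t - a) hmap (tendsto_map'_iff.2 (ha hf hfL)))

/-- Along `f`, each window integral in `hasSum_mul_integral` is close to `L * ℓ i`. -/
theorem mul_mean_eq_integral (h : IsRenewalSolution w ℓ g Z) (hZ : ExpMonotone ρ Z) (hρ : 0 ≤ ρ)
    (hC : ∀ t, Z t ∈ Icc 0 C) (hg : IntegrableOn g (Ioi 0)) (hm : Summable fun i => w i * ℓ i)
    {f : Ultrafilter ℝ} (hf : (f : Filter ℝ) ≤ atTop)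
    (hL : ∀ ε > 0, ∃ T, ∀ a b, T ≤ a → ∀ᶠ t in f, ∀ u ∈ Icc a b, |Z (t - u) - L| ≤ ε) :
    L * ∑' i, w i * ℓ i = ∫ t in Ioi 0, g t := by
  set m := ∑' i, w i * ℓ i
  suffices happrox : ∀ ε > 0, |(∫ t in Ioi 0, g t) - L * m| ≤ ε * m by
    have hlim : Tendsto (fun ε => ε * m) (𝓝[>] 0) (𝓝 0) :=
      ((continuous_mul_const m).tendsto' 0 0 (zero_mul m)).mono_left nhdsWithin_le_nhds
    have hzero := ge_of_tendsto hlim (eventually_mem_nhdsWithin.mono happrox)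
    exact (sub_eq_zero.1 (abs_nonpos_iff.1 hzero)).symm
  intro ε hε
  obtain ⟨T, hT⟩ := hL ε hε
  have htT : Tendsto (fun t => t - T) f atTop :=
    (tendsto_atTop_add_const_right _ (-T) tendsto_id).mono_left hf
  have hC' (i : ι) (t : ℝ) : |∫ u in (t - T - ℓ i)..(t - T), Z u| ≤ C * ℓ i := by
    simpa only [zero_mul, sub_zero, sub_sub_cancel] using
      abs_integral_sub_mul_le (L := 0) (sub_le_self _ (h.step_pos i).le)
        (hZ.intervalIntegrable _ _) fun u _ => by simpa [abs_of_nonneg (hC u).1] using (hC u).2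
  obtain ⟨K, hK, hsum⟩ := exists_tendsto_hasSum_mul_of_ultrafilter f
    (b := fun i => C * ℓ i) (F := fun i t => ∫ u in (t - T - ℓ i)..(t - T), Z u)
    (by simpa only [abs_of_pos (h.weight_pos _), mul_left_comm] using hm.mul_left C) hC'
    ((htT.eventually_ge_atTop 0).mono fun t ht => h.hasSum_mul_integral hZ hρ hg ht)
    ((intervalIntegral_tendsto_integral_Ioi 0 hg tendsto_id).comp htT)
  have hKL (i : ι) : |K i - L * ℓ i| ≤ ε * ℓ i := by
    refine le_of_tendsto ((hK i).sub_const _).abs ((hT T (T + ℓ i) le_rfl).mono fun t ht => ?_)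
    have hint := abs_integral_sub_mul_le (b := t - T) (sub_le_self _ (h.step_pos i).le)
      (hZ.intervalIntegrable _ _) fun u hu => by
        simpa only [sub_sub_cancel] using ht (t - u) ⟨by linarith [hu.2], by linarith [hu.1]⟩
    rwa [sub_sub_cancel] at hint
  refine (hsum.sub (hm.hasSum.mul_left L)).norm_le_of_bounded (hm.hasSum.mul_left ε) fun i => ?_
  calc ‖w i * K i - L * (w i * ℓ i)‖ = w i * |K i - L * ℓ i| := by
        rw [mul_left_comm, ← mul_sub, norm_mul, norm_of_nonneg (h.weight_pos i).le, norm_eq_abs]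
    _ ≤ w i * (ε * ℓ i) := mul_le_mul_of_nonneg_left (hKL i) (h.weight_pos i).le
    _ = ε * (w i * ℓ i) := mul_left_comm _ _ _

theorem tendsto_atTop (h : IsRenewalSolution w ℓ g Z) (hZ : ExpMonotone ρ Z) (hρ : 0 ≤ ρ)
    (hg : IntegrableOn g (Ioi 0)) (hg0 : Tendsto g atTop (𝓝 0))
    (hm : Summable fun i => w i * ℓ i) (hdense : Dense (AddSubgroup.closure (range ℓ) : Set ℝ)) :
    Tendsto Z atTop (𝓝 ((∫ t in Ioi 0, g t) / ∑' i, w i * ℓ i)) := by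
  obtain ⟨C, hC⟩ := h.exists_forall_mem_Icc hZ hρ hg
  obtain ⟨i⟩ := h.nonempty
  have hmean : 0 < ∑' i, w i * ℓ i :=
    hm.tsum_pos (fun j => (mul_pos (h.weight_pos j) (h.step_pos j)).le) i
      (mul_pos (h.weight_pos i) (h.step_pos i))
  have hS := eventuallyDense_addSubmonoid_closure (forall_mem_range.2 h.step_pos)
    ⟨_, mem_range_self i⟩ hdense
  have hvalue {L : ℝ} (hL : MapClusterPt L atTop Z)
      (hext : (∀ x, MapClusterPt x atTop Z → x ≤ L) ∨ ∀ x, MapClusterPt x atTop Z → L ≤ x) :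
      L = (∫ t in Ioi 0, g t) / ∑' i, w i * ℓ i := by
    obtain ⟨f, hf, hfL⟩ := mapClusterPt_iff_ultrafilter.1 hL
    refine (eq_div_iff hmean.ne').2 (h.mul_mean_eq_integral hZ hρ hC hg hm hf fun ε hε => ?_)
    exact hZ.eventually_forall_mem_Icc_of_eventuallyDense hρ (fun t => (hC t).1) hS
      (fun s hs => h.tendsto_sub_of_mem_closure hC hg0 hext hs hf hfL) hε
  have hclusterIcc {x : ℝ} (hx : MapClusterPt x atTop Z) : x ∈ Icc 0 C :=
    isClosed_Icc.mem_of_mapClusterPt hx (Eventually.of_forall hC)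
  have hcompact : IsCompact {x | MapClusterPt x atTop Z} :=
    isCompact_Icc.of_isClosed_subset isClosed_setOfPred_clusterPt fun x hx => hclusterIcc hx
  obtain ⟨y, -, hy⟩ := isCompact_Icc.exists_mapClusterPt_of_frequently
    (Eventually.of_forall (f := atTop) hC).frequently
  obtain ⟨M, hM, hMmax⟩ := hcompact.exists_isGreatest ⟨y, hy⟩
  obtain ⟨m, hm, hmmin⟩ := hcompact.exists_isLeast ⟨y, hy⟩
  refine isCompact_Icc.tendsto_nhds_of_unique_mapClusterPt (Eventually.of_forall hC)
    fun x _ hx => le_antisymm ?_ ?_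
  · exact (hMmax hx).trans_eq (hvalue hM (.inl fun x hx => hMmax hx))
  · exact (hvalue hm (.inr fun x hx => hmmin hx)).symm.trans_le (hmmin hx)

end IsRenewalSolution

end Renewal

section Factorizations

open Finset ArithmeticFunction

theorem nonempty_of_not_subset_powers {P : Set ℕ}
    (hnp : ∀ d : ℕ, 2 ≤ d → ¬ P ⊆ {n : ℕ | ∃ k : ℕ, 1 ≤ k ∧ n = d ^ k}) : P.Nonempty := by
  rw [Set.nonempty_iff_ne_empty]
  rintro rfl
  exact hnp 2 le_rfl (Set.empty_subset _)

theorem exists_rat_cast_eq_exp_of_mem_closure_log {P : Set ℕ} (hP : ∀ n ∈ P, n ≠ 0) {x : ℝ}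
    (hx : x ∈ AddSubgroup.closure ((fun n : ℕ => Real.log n) '' P)) :
    ∃ q : ℚ, (q : ℝ) = Real.exp x := by
  induction hx using AddSubgroup.closure_induction with
  | mem x hx =>
    obtain ⟨n, hn, rfl⟩ := hx
    exact ⟨n, by simp [Real.exp_log (show (0 : ℝ) < n by exact_mod_cast (hP n hn).bot_lt)]⟩
  | zero => exact ⟨1, by simp⟩
  | add x y _ _ hx hy =>
    obtain ⟨p, hp⟩ := hx
    obtain ⟨q, hq⟩ := hy
    exact ⟨p * q, by rw [Rat.cast_mul, hp, hq, Real.exp_add]⟩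
  | neg x _ hx =>
    obtain ⟨q, hq⟩ := hx
    exact ⟨q⁻¹, by rw [Rat.cast_inv, hq, Real.exp_neg]⟩

theorem exists_exp_abs_pow_eq_of_log_mem_zmultiples {n a : ℝ} (hn : 1 < n)
    (h : Real.log n ∈ AddSubgroup.zmultiples a) : ∃ k : ℕ, 1 ≤ k ∧ Real.exp |a| ^ k = n := by
  obtain ⟨k, hk⟩ := AddSubgroup.mem_zmultiples_iff.1 h
  have hlog : k.natAbs * |a| = Real.log n := by
    rw [Nat.cast_natAbs, Int.cast_abs, ← abs_mul, ← zsmul_eq_mul, hk, abs_of_pos (Real.log_pos hn)]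
  refine ⟨k.natAbs, Nat.one_le_iff_ne_zero.2 fun hk0 => ?_, ?_⟩
  · rw [hk0, Nat.cast_zero, zero_mul] at hlog
    exact (Real.log_pos hn).ne hlog
  · rw [← Real.exp_nat_mul, hlog, Real.exp_log (by linarith)]

/-- A cyclic group of logarithms is generated by the logarithm of a rational number, which is an
integer because one of its powers is. -/
theorem dense_closure_log {P : Set ℕ} (hP : ∀ n ∈ P, 2 ≤ n)
    (hnp : ∀ d : ℕ, 2 ≤ d → ¬ P ⊆ {n : ℕ | ∃ k : ℕ, 1 ≤ k ∧ n = d ^ k}) :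
    Dense (AddSubgroup.closure ((fun n : ℕ => Real.log n) '' P) : Set ℝ) := by
  refine (AddSubgroup.dense_or_cyclic _).resolve_right ?_
  rintro ⟨a, ha⟩
  rw [← AddSubgroup.zmultiples_eq_closure] at ha
  obtain ⟨p, hp⟩ := nonempty_of_not_subset_powers hnp
  have habs : |a| ∈ AddSubgroup.closure ((fun n : ℕ => Real.log n) '' P) := by
    rw [ha]
    rcases abs_choice a with h | h <;> simp [h]
  obtain ⟨q, hq⟩ := exists_rat_cast_eq_exp_of_mem_closure_log (fun n hn => by grind) habs
  have hpow (n : ℕ) (hn : n ∈ P) : ∃ k : ℕ, 1 ≤ k ∧ Real.exp |a| ^ k = n :=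
    exists_exp_abs_pow_eq_of_log_mem_zmultiples (by exact_mod_cast hP n hn)
      (ha ▸ AddSubgroup.subset_closure (Set.mem_image_of_mem _ hn))
  obtain ⟨d, hd⟩ : ∃ d : ℤ, Real.exp |a| = d := by
    obtain ⟨k, hk, hkp⟩ := hpow p hp
    by_contra hint
    exact irrational_nrt_of_notint_nrt k p (by exact_mod_cast hkp) hint hk ⟨q, hq⟩
  lift d to ℕ using by exact_mod_cast hd ▸ (Real.exp_pos |a|).le
  simp only [hd, Int.cast_natCast] at hpow
  norm_cast at hpow
  refine hnp d ?_ fun n hn => (hpow n hn).imp fun k hk => ⟨hk.1, hk.2.symm⟩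
  obtain ⟨k, hk, hkp⟩ := hpow p hp
  by_contra! hd2
  have := hP p hp
  have := Nat.pow_le_one_iff (n := k) (a := d) (by omega)
  omega

theorem arithmeticFunction_sum_apply {ι R : Type*} [AddCommMonoid R] (s : Finset ι)
    (f : ι → ArithmeticFunction R) (n : ℕ) : (∑ i ∈ s, f i) n = ∑ i ∈ s, f i n :=
  map_sum ({ toFun := fun g => g n, map_zero' := rfl, map_add' := fun _ _ => rfl } :
    ArithmeticFunction R →+ R) f s

theorem pow_apply_eq_sum_finMulAntidiag {R : Type*} [CommSemiring R] (f : ArithmeticFunction R)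
    (m n : ℕ) : (f ^ m) n = ∑ t ∈ Nat.finMulAntidiag m n, ∏ i, f (t i) := by
  induction m generalizing n with
  | zero =>
    rcases eq_or_ne n 1 with rfl | hn
    · simp [Nat.finMulAntidiag_one]
    · simp [Nat.finMulAntidiag_zero_left hn, one_apply_ne hn]
  | succ m ih =>
    simp only [pow_succ', mul_apply, ih, mul_sum, sum_sigma']
    refine sum_bij' (fun x _ => Fin.cons x.1.1 x.2)
      (fun t _ => ⟨(t 0, ∏ i, Fin.tail t i), Fin.tail t⟩) ?_ ?_ ?_ ?_ ?_
    · simp only [mem_sigma, Nat.mem_divisorsAntidiagonal, Nat.mem_finMulAntidiag,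
        Fin.prod_univ_succ, Fin.cons_zero, Fin.cons_succ]
      grind
    · simp only [mem_sigma, Nat.mem_divisorsAntidiagonal, Nat.mem_finMulAntidiag,
        Fin.prod_univ_succ, Fin.tail]
      grind
    · rintro ⟨⟨a, b⟩, t⟩ hx
      simp only [mem_sigma, Nat.mem_finMulAntidiag] at hx
      simp [hx.2.1]
    · simp
    · simp [Fin.prod_univ_succ]

/-- The indicator function of the admissible factors, as an element of the Dirichlet ring. -/
def factorIndicator (P : Set ℕ) : ArithmeticFunction ℝ where
  toFun := (P \ {0}).indicator 1
  map_zero' := by simp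

theorem cast_af (P : Set ℕ) (m : ℕ) {n : ℕ} (hn : n ≠ 0) :
    (af P m n : ℝ) = (factorIndicator P ^ m) n := by
  classical
  have hcard : af P m n = #{t ∈ Nat.finMulAntidiag m n | ∀ i, t i ∈ P} :=
    Nat.subtype_card _ fun t => by simp [hn, and_comm]
  have hprod (t : Fin m → ℕ) (ht : t ∈ Nat.finMulAntidiag m n) :
      ∏ i, factorIndicator P (t i) = if ∀ i, t i ∈ P then 1 else 0 := by
    have h0 := Nat.ne_zero_of_mem_finMulAntidiag ht
    simp [factorIndicator, Set.indicator_apply, prod_ite_zero, h0]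
  rw [hcard, natCast_card_filter, pow_apply_eq_sum_finMulAntidiag, sum_congr rfl hprod]

theorem af_eq_zero {P : Set ℕ} (hP : ∀ n ∈ P, 2 ≤ n) {m n : ℕ} (hmn : n ≤ m) :
    af P m n = 0 := by
  rw [af, Nat.card_eq_zero]
  refine .inl ⟨fun ⟨t, htP, htn⟩ => ?_⟩
  have hpow : 2 ^ m ≤ n := by
    simpa [htn] using prod_le_prod' (s := univ) fun i _ => hP (t i) (htP i)
  exact (hmn.trans_lt m.lt_two_pow_self).not_ge hpow

theorem aTot_nonneg (P : Set ℕ) (n : ℕ) : 0 ≤ aTot P n :=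
  tsum_nonneg fun m => Nat.cast_nonneg (af P m n)

theorem Acum_monotone (P : Set ℕ) : Monotone (Acum P) := fun _ _ h =>
  sum_le_sum_of_subset_of_nonneg (Icc_subset_Icc_right h) fun n _ _ => aTot_nonneg P n

theorem Acum_zero (P : Set ℕ) : Acum P 0 = 0 := by
  simp [Acum]

theorem Acum_eq_sum_geom_sum {P : Set ℕ} (hP : ∀ n ∈ P, 2 ≤ n) {M N : ℕ} (hNM : N ≤ M) :
    Acum P N = ∑ n ∈ Ioc 0 N, (∑ m ∈ range M, factorIndicator P ^ m) n := by
  refine sum_congr rfl fun n hn => ?_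
  obtain ⟨hn1, hnN⟩ := mem_Icc.1 hn
  have hn0 : n ≠ 0 := by omega
  rw [aTot, tsum_eq_sum (s := range M) fun m hm => ?_]
  · simp only [cast_af P _ hn0, arithmeticFunction_sum_apply]
  · rw [af_eq_zero hP (by grind), Nat.cast_zero]

/-- Peel off the first factor: `∑ χ ^ m = 1 + χ * ∑ χ ^ m` in the Dirichlet ring. -/
theorem hasSum_Acum_div {P : Set ℕ} (hP : ∀ n ∈ P, 2 ≤ n) {N : ℕ} (hN : N ≠ 0) :
    HasSum (fun n : P => Acum P (N / n)) (Acum P N - 1) := by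
  have hrec : Acum P N = ∑ n ∈ Ioc 0 N, factorIndicator P n * Acum P (N / n) + 1 := by
    have hone : ∑ n ∈ Ioc 0 N, (1 : ArithmeticFunction ℝ) n = 1 := by
      simp [one_apply, Nat.one_le_iff_ne_zero, hN]
    simp only [Acum_eq_sum_geom_sum hP N.le_succ, geom_sum_succ, ArithmeticFunction.add_apply,
      sum_add_distrib, sum_Ioc_mul_eq_sum_sum, hone,
      ← Acum_eq_sum_geom_sum hP (Nat.div_le_self N _)]
  rw [hrec, add_sub_cancel_right]
  refine (hasSum_subtype_iff_indicator (f := fun n => Acum P (N / n))).2 ?_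
  have heq : P.indicator (fun n => Acum P (N / n)) =
      fun n => factorIndicator P n * Acum P (N / n) := by
    ext n
    by_cases hn : n ∈ P
    · simp [factorIndicator, hn, show n ≠ 0 by grind]
    · simp [factorIndicator, hn]
  rw [heq]
  refine hasSum_sum_of_ne_finset_zero fun n hn => ?_
  rcases eq_or_ne n 0 with rfl | hn0
  · simp
  · rw [Nat.div_eq_of_lt (by grind), Acum_zero, mul_zero]

end Factorizations

section CountingFunction

open Set Topology MeasureTheory

/-- The counting function of `P`-factorizations in the logarithmic scale, normalized to
`Z t = e ^ (-ρ t) A(e ^ t)`. -/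
def normalizedCount (P : Set ℕ) (ρ t : ℝ) : ℝ :=
  Real.exp (-ρ * t) * Acum P ⌊Real.exp t⌋₊

theorem exp_mul_normalizedCount (P : Set ℕ) (ρ t : ℝ) :
    Real.exp (ρ * t) * normalizedCount P ρ t = Acum P ⌊Real.exp t⌋₊ := by
  rw [normalizedCount, ← mul_assoc, ← Real.exp_add, neg_mul, add_neg_cancel, Real.exp_zero,
    one_mul]

theorem expMonotone_normalizedCount (P : Set ℕ) (ρ : ℝ) : ExpMonotone ρ (normalizedCount P ρ) := by
  intro s t hst
  simp only [exp_mul_normalizedCount]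
  exact Acum_monotone P (Nat.floor_mono (Real.exp_le_exp.2 hst))

theorem isRenewalSolution_normalizedCount {P : Set ℕ} (hP : ∀ n ∈ P, 2 ≤ n) {ρ : ℝ}
    (hρ : Pval P ρ = 1) :
    IsRenewalSolution (fun n : P => (n : ℝ) ^ (-ρ)) (fun n : P => Real.log n)
      (fun t => Real.exp (-ρ * t)) (normalizedCount P ρ) where
  weight_pos n := Real.rpow_pos_of_pos (by exact_mod_cast two_pos.trans_le (hP n n.2)) _
  hasSum_weight := by
    have hsum : Summable fun n : P => (n : ℝ) ^ (-ρ) := by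
      by_contra h
      exact zero_ne_one ((tsum_eq_zero_of_not_summable h).symm.trans hρ)
    exact hρ ▸ hsum.hasSum
  step_pos n := Real.log_pos (by exact_mod_cast hP n n.2)
  eq_zero_of_neg t ht := by
    rw [normalizedCount, Nat.floor_eq_zero.2 (Real.exp_lt_one_iff.2 ht), Acum_zero, mul_zero]
  hasSum_mul_sub t ht := by
    have hN : ⌊Real.exp t⌋₊ ≠ 0 := (Nat.floor_pos.2 (Real.one_le_exp ht)).ne'
    have hrec := (hasSum_Acum_div hP hN).mul_left (Real.exp (-ρ * t))
    rw [mul_sub_one] at hrec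
    refine hrec.congr_fun fun n => ?_
    have hn : (0 : ℝ) < n := by exact_mod_cast two_pos.trans_le (hP n n.2)
    rw [normalizedCount, Real.exp_sub, Real.exp_log hn, Nat.floor_div_natCast,
      Real.rpow_def_of_pos hn, ← mul_assoc, ← Real.exp_add]
    ring_nf

theorem summable_rpow_mul_log_of_kappa_lt {P : Set ℕ} (hP : ∀ n ∈ P, n ≠ 0) {ρ : ℝ}
    (hρ : kappa P < ρ) : Summable fun n : P => (n : ℝ) ^ (-ρ) * Real.log n := by
  obtain ⟨_, ⟨r, rfl, hr⟩, hrρ⟩ := sInf_lt_iff.1 hρ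
  have hgap : 0 < ρ - r := sub_pos.2 (EReal.coe_lt_coe_iff.1 hrρ)
  refine (hr.mul_right (ρ - r)⁻¹).of_nonneg_of_le (fun n => by positivity) fun n => ?_
  have hn : (0 : ℝ) < n := by exact_mod_cast (hP n n.2).bot_lt
  calc (n : ℝ) ^ (-ρ) * Real.log n ≤ (n : ℝ) ^ (-ρ) * ((n : ℝ) ^ (ρ - r) / (ρ - r)) := by
        gcongr
        exact Real.log_le_rpow_div hn.le hgap
    _ = (n : ℝ) ^ (-r) * (ρ - r)⁻¹ := by
        rw [div_eq_mul_inv, ← mul_assoc, ← Real.rpow_add hn, neg_add_eq_sub, sub_sub_cancel_left]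

theorem Pderiv1_neg {P : Set ℕ} (hP : ∀ n ∈ P, 2 ≤ n) (hne : P.Nonempty) {ρ : ℝ}
    (hρ : kappa P < ρ) : Pderiv1 P ρ < 0 := by
  obtain ⟨p, hp⟩ := hne
  have hpos (n : P) : 0 < (n : ℝ) ^ (-ρ) * Real.log n := by
    have : (1 : ℝ) < n := by exact_mod_cast hP n n.2
    exact mul_pos (by positivity) (Real.log_pos this)
  exact neg_lt_zero.2 <| (summable_rpow_mul_log_of_kappa_lt (fun n hn => by grind) hρ).tsum_pos
    (fun n => (hpos n).le) ⟨p, hp⟩ (hpos _)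

theorem tendsto_normalizedCount {P : Set ℕ} (hP : ∀ n ∈ P, 2 ≤ n) {ρ : ℝ} (hρ0 : 0 < ρ)
    (hρκ : kappa P < ρ) (hρ1 : Pval P ρ = 1)
    (hnp : ∀ d : ℕ, 2 ≤ d → ¬ P ⊆ {n : ℕ | ∃ k : ℕ, 1 ≤ k ∧ n = d ^ k}) :
    Tendsto (normalizedCount P ρ) atTop (𝓝 (-1 / Pderiv1 P ρ / ρ)) := by
  have hdense := dense_closure_log hP hnp
  rw [image_eq_range] at hdense
  have hlim := (isRenewalSolution_normalizedCount hP hρ1).tendsto_atTop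
    (expMonotone_normalizedCount P ρ) hρ0.le (integrableOn_exp_mul_Ioi (neg_neg_of_pos hρ0) 0)
    (Real.tendsto_exp_atBot.comp (tendsto_id.const_mul_atTop_of_neg (neg_neg_of_pos hρ0)))
    (summable_rpow_mul_log_of_kappa_lt (fun n hn => by grind) hρκ) hdense
  convert hlim using 2
  rw [integral_exp_mul_Ioi (neg_neg_of_pos hρ0), mul_zero, Real.exp_zero, Pderiv1, neg_div_neg_eq,
    neg_div_neg_eq, div_right_comm]

theorem Acum_isEquivalent {P : Set ℕ} (hP : ∀ n ∈ P, 2 ≤ n) {ρ : ℝ} (hρ0 : 0 < ρ)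
    (hρκ : kappa P < ρ) (hρ1 : Pval P ρ = 1)
    (hnp : ∀ d : ℕ, 2 ≤ d → ¬ P ⊆ {n : ℕ | ∃ k : ℕ, 1 ≤ k ∧ n = d ^ k}) :
    (fun N : ℕ => Acum P N) ~[atTop] fun N : ℕ => -1 / Pderiv1 P ρ / ρ * (N : ℝ) ^ ρ := by
  have hderiv := Pderiv1_neg hP (nonempty_of_not_subset_powers hnp) hρκ
  have hC : -1 / Pderiv1 P ρ / ρ ≠ 0 :=
    div_ne_zero (div_ne_zero (by norm_num) hderiv.ne) hρ0.ne'
  have hlim := (tendsto_normalizedCount hP hρ0 hρκ hρ1 hnp).comp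
    (Real.tendsto_log_atTop.comp tendsto_natCast_atTop_atTop)
  refine (((isEquivalent_const_iff_tendsto hC).2 hlim).mul
    (IsEquivalent.refl (u := fun N : ℕ => (N : ℝ) ^ ρ))).congr_left ?_
  filter_upwards [eventually_gt_atTop 0] with N hN
  have hN0 : (0 : ℝ) < N := by exact_mod_cast hN
  simp only [Pi.mul_apply, Function.comp_apply]
  rw [mul_comm, Real.rpow_def_of_pos hN0, mul_comm (Real.log N), exp_mul_normalizedCount,
    Real.exp_log hN0, Nat.floor_natCast]

end CountingFunction

section SlowVariation

open Finset Topology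

/-- Slow variation at infinity in the sense of Karamata; the ratio forces `f` to be eventually
nonzero, since it would otherwise take the value `0 / 0 = 0`. -/
def SlowlyVarying (f : ℝ → ℝ) : Prop :=
  ∀ c > 0, Tendsto (fun x => f (c * x) / f x) atTop (𝓝 1)

variable {f : ℝ → ℝ}

namespace SlowlyVarying

theorem log : SlowlyVarying Real.log := by
  intro c hc
  have hlim : Tendsto (fun x => Real.log c / Real.log x + 1) atTop (𝓝 1) := by
    simpa only [zero_add] using
      (tendsto_const_nhds.div_atTop Real.tendsto_log_atTop).add_const (1 : ℝ)
  refine hlim.congr' ?_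
  filter_upwards [eventually_gt_atTop 1] with x hx
  rw [Real.log_mul hc.ne' (by linarith), add_div, div_self (Real.log_pos hx).ne']

theorem pow (hf : SlowlyVarying f) (k : ℕ) : SlowlyVarying fun x => f x ^ k := by
  intro c hc
  simpa only [div_pow, one_pow] using (hf c hc).pow k

theorem eventually_ne_zero (hf : SlowlyVarying f) : ∀ᶠ x in atTop, f x ≠ 0 :=
  ((hf 1 one_pos).eventually_ne one_ne_zero).mono fun _ hx => (div_ne_zero_iff.1 hx).2

end SlowlyVarying

theorem tendsto_floor_mul_div_of_isEquivalent {A : ℕ → ℝ} {C ρ δ : ℝ} (hC : C ≠ 0) (hδ : 0 < δ)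
    (hA : A ~[atTop] fun N : ℕ => C * (N : ℝ) ^ ρ) :
    Tendsto (fun N : ℕ => A ⌊δ * N⌋₊ / A N) atTop (𝓝 (δ ^ ρ)) := by
  have hcast : Tendsto (fun N : ℕ => (N : ℝ)) atTop atTop := tendsto_natCast_atTop_atTop
  have hfloor : Tendsto (fun N : ℕ => ⌊δ * N⌋₊) atTop atTop :=
    tendsto_nat_floor_atTop.comp (hcast.const_mul_atTop hδ)
  have hratio : Tendsto (fun N : ℕ => ((⌊δ * N⌋₊ : ℝ) / N) ^ ρ) atTop (𝓝 (δ ^ ρ)) :=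
    ((tendsto_nat_floor_mul_div_atTop hδ.le).comp hcast).rpow_const (.inl hδ.ne')
  refine ((hA.comp_tendsto hfloor).div hA).symm.tendsto_nhds (hratio.congr fun N => ?_)
  simp [Real.div_rpow, mul_div_mul_left _ _ hC]

variable {a : ℕ → ℝ}

theorem sum_mul_le_sum_mul_of_monotoneOn (hf : MonotoneOn f (Set.Ici 1)) (ha : ∀ n, 0 ≤ a n)
    (N : ℕ) : ∑ n ∈ Icc 1 N, a n * f n ≤ (∑ n ∈ Icc 1 N, a n) * f N := by
  rw [sum_mul]
  refine sum_le_sum fun n hn => mul_le_mul_of_nonneg_left ?_ (ha n)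
  obtain ⟨h1, hN⟩ := mem_Icc.1 hn
  exact hf (by simpa using h1) (by simpa using h1.trans hN) (by exact_mod_cast hN)

theorem sum_sub_sum_mul_le_sum_mul_of_monotoneOn (hf : MonotoneOn f (Set.Ici 1)) (hf1 : 0 ≤ f 1)
    (ha : ∀ n, 0 ≤ a n) {x : ℝ} (hx : 1 ≤ x) {N : ℕ} (hxN : x ≤ N) :
    ((∑ n ∈ Icc 1 N, a n) - ∑ n ∈ Icc 1 ⌊x⌋₊, a n) * f x ≤ ∑ n ∈ Icc 1 N, a n * f n := by
  have hsub : Icc 1 ⌊x⌋₊ ⊆ Icc 1 N := Icc_subset_Icc_right (Nat.floor_le_of_le hxN)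
  rw [← sum_sdiff_eq_sub hsub, sum_mul]
  refine (sum_le_sum fun n hn => mul_le_mul_of_nonneg_left ?_ (ha n)).trans
    (sum_le_sum_of_subset_of_nonneg sdiff_subset fun n hn _ => mul_nonneg (ha n) ?_)
  · have hxn : x < n := Nat.lt_of_floor_lt (by grind)
    exact hf hx (hx.trans hxn.le) hxn.le
  · have hn1 : (1 : ℝ) ≤ n := by exact_mod_cast (mem_Icc.1 hn).1
    exact hf1.trans (hf Set.self_mem_Ici hn1 hn1)

theorem isEquivalent_sum_mul_of_slowlyVarying {C ρ : ℝ} (hf : SlowlyVarying f)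
    (hmono : MonotoneOn f (Set.Ici 1)) (hf1 : 0 ≤ f 1) (ha : ∀ n, 0 ≤ a n) (hC : 0 < C)
    (hρ : 0 < ρ) (hA : (fun N => ∑ n ∈ Icc 1 N, a n) ~[atTop] fun N : ℕ => C * (N : ℝ) ^ ρ) :
    (fun N => ∑ n ∈ Icc 1 N, a n * f n) ~[atTop] fun N : ℕ => (∑ n ∈ Icc 1 N, a n) * f N := by
  set A := fun N => ∑ n ∈ Icc 1 N, a n
  have hcast : Tendsto (fun N : ℕ => (N : ℝ)) atTop atTop := tendsto_natCast_atTop_atTop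
  have hApos : ∀ᶠ N in atTop, 0 < A N :=
    (hA.symm.tendsto_atTop (((tendsto_rpow_atTop hρ).comp hcast).const_mul_atTop
      hC)).eventually_gt_atTop 0
  have hfpos : ∀ᶠ N : ℕ in atTop, 0 < f N := by
    filter_upwards [hcast.eventually hf.eventually_ne_zero, hcast.eventually_ge_atTop 1]
      with N hN hN1
    exact (hf1.trans (hmono Set.self_mem_Ici hN1 hN1)).lt_of_ne' hN
  have hlower (δ : ℝ) (hδ : δ ∈ Set.Ioc 0 1) : ∀ᶠ N : ℕ in atTop,
      (1 - A ⌊δ * N⌋₊ / A N) * (f (δ * N) / f N) ≤ (∑ n ∈ Icc 1 N, a n * f n) / (A N * f N) := by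
    filter_upwards [hApos, hfpos, (hcast.const_mul_atTop hδ.1).eventually_ge_atTop 1]
      with N hAN hfN hN
    rw [one_sub_div hAN.ne', div_mul_div_comm]
    gcongr
    exact sum_sub_sum_mul_le_sum_mul_of_monotoneOn hmono hf1 ha hN
      (mul_le_of_le_one_left N.cast_nonneg hδ.2)
  refine isEquivalent_of_tendsto_one (tendsto_order.2 ⟨fun b hb => ?_, fun b hb => ?_⟩)
  · have hzero : Tendsto (fun δ : ℝ => (1 - δ ^ ρ) * 1) (𝓝[>] 0) (𝓝 1) := by
      have hcont := (Real.continuousAt_rpow_const 0 ρ (.inr hρ.le)).tendsto.const_sub 1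
      simpa [Real.zero_rpow hρ.ne'] using hcont.mono_left nhdsWithin_le_nhds
    obtain ⟨δ, hδb, hδ⟩ := ((hzero.eventually_const_lt hb).and
      (Ioc_mem_nhdsGT one_pos)).exists
    have hlim := ((tendsto_floor_mul_div_of_isEquivalent hC.ne' hδ.1 hA).const_sub 1).mul
      ((hf δ hδ.1).comp hcast)
    filter_upwards [hlim.eventually_const_lt hδb, hlower δ hδ] with N hN hN'
    exact hN.trans_le hN'
  · filter_upwards [hApos, hfpos] with N hAN hfN
    exact ((div_le_one (mul_pos hAN hfN)).2
      (sum_mul_le_sum_mul_of_monotoneOn hmono ha N)).trans_lt hb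

end SlowVariation

theorem log_weighted_sum_asymptotic_general {P : Set ℕ} (hP : ∀ n ∈ P, 2 ≤ n)
    {ρ : ℝ} (hρ0 : 0 < ρ) (hρκ : kappa P < (ρ : EReal)) (hρ1 : Pval P ρ = 1)
    {μ : ℝ} (hμ : μ = -1 / Pderiv1 P ρ)
    (hnp : ∀ d : ℕ, 2 ≤ d → ¬ P ⊆ {n : ℕ | ∃ k : ℕ, 1 ≤ k ∧ n = d ^ k})
    {f : ℝ → ℝ} (hf : SlowlyVarying f) (hmono : MonotoneOn f (Set.Ici 1)) (hf1 : 0 ≤ f 1) :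
    (fun N : ℕ => ∑ n ∈ Finset.Icc 1 N, aTot P n * f n) ~[atTop]
      (fun N : ℕ => μ / ρ * (N : ℝ) ^ ρ * f N) ∧
    (fun N : ℕ => ∑ n ∈ Finset.Icc 1 N, aTot P n * f n) ~[atTop]
      (fun N : ℕ => Acum P N * f N) := by
  have hA : (fun N : ℕ => Acum P N) ~[atTop] fun N : ℕ => μ / ρ * (N : ℝ) ^ ρ :=
    hμ ▸ Acum_isEquivalent hP hρ0 hρκ hρ1 hnp
  have hμ0 : 0 < μ := hμ ▸ div_pos_of_neg_of_neg neg_one_lt_zero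
    (Pderiv1_neg hP (nonempty_of_not_subset_powers hnp) hρκ)
  have hweighted := isEquivalent_sum_mul_of_slowlyVarying hf hmono hf1 (aTot_nonneg P)
    (div_pos hμ0 hρ0) hρ0 hA
  exact ⟨hweighted.trans (hA.mul .refl), hweighted⟩

/-- **Logarithmically weighted sums.** Under the stated assumptions, including
non-periodicity, for every fixed `k ≥ 0`,
`Σ_{n ≤ N} a(n) (log n)^k ∼ (μ/ρ) N^ρ (log N)^k ∼ A(N) (log N)^k`. -/
theorem log_weighted_sum_asymptotic
    (P : Set ℕ) (hP : ∀ n ∈ P, 2 ≤ n) (hP2 : P.Nontrivial)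
    (hκ : 1 < PvalE P (kappa P))
    (ρ : ℝ) (hρ0 : 0 < ρ) (hρκ : kappa P < (ρ : EReal)) (hρ1 : Pval P ρ = 1)
    (μ : ℝ) (hμ : μ = -1 / Pderiv1 P ρ)
    (hnp : ∀ d : ℕ, 2 ≤ d → ¬ P ⊆ {n : ℕ | ∃ k : ℕ, 1 ≤ k ∧ n = d ^ k})
    (k : ℕ) :
    Asymptotics.IsEquivalent atTop
      (fun N : ℕ => ∑ n ∈ Finset.Icc 1 N, aTot P n * (Real.log n) ^ k)
      (fun N : ℕ => (μ / ρ) * (N : ℝ) ^ ρ * (Real.log N) ^ k) ∧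
    Asymptotics.IsEquivalent atTop
      (fun N : ℕ => ∑ n ∈ Finset.Icc 1 N, aTot P n * (Real.log n) ^ k)
      (fun N : ℕ => Acum P N * (Real.log N) ^ k) :=
  log_weighted_sum_asymptotic_general hP hρ0 hρκ hρ1 hμ hnp (SlowlyVarying.log.pow k)
    (fun _ hx _ _ hxy => pow_le_pow_left₀ (Real.log_nonneg hx)
      (Real.log_le_log (one_pos.trans_le hx) hxy) k) (by simp)
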